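/- arXiv:2401.12891 — 3 statements merged into one kernel-verified Lean document; each statement's English description precedes it below -/
import Mathlib

section
/- Let q be a prime and let r be an integer coprime to q. Then ∑*_{χ mod q} G(χ)²·conj(χ)(r) = φ(q)·S(1, r; q) − 1, where the sum is over all primitive Dirichlet characters χ modulo q. -/
/-!
Expand `G(χ)²` as a sum of `χ(uv) e_q(u + v)` over pairs of units. The pairs with `uv = c`
contribute `χ(c) S(1, c; q)`, so `G(χ)²` is the multiplicative Fourier transform of
`c ↦ S(1, c; q)`. Fourier inversion on `(ℤ/qℤ)ˣ` gives `φ(q) S(1, r; q)` for the sum over *all*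
characters. For prime `q` the only imprimitive one is the principal character, whose Gauss sum
is `-1`.
-/

open Finset

/-- `e_q(x) = exp(2πi x / q)`. -/
noncomputable def expq (q : ℕ) (x : ℤ) : ℂ :=
  Complex.exp (2 * Real.pi * Complex.I * x / q)

/-- The Kloosterman sum `S(a, b; q) = ∑_{x ∈ (ℤ/qℤ)ˣ} e_q(a x + b x⁻¹)`. -/
noncomputable def kloos (a b : ℤ) (q : ℕ) [NeZero q] : ℂ :=
  ∑ x : (ZMod q)ˣ,
    expq q (a * ((x : ZMod q).val : ℤ) + b * ((((x⁻¹ : (ZMod q)ˣ) : ZMod q)).val : ℤ))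

/-- The Gauss sum `G(χ) = ∑_{a mod q} χ(a) e_q(a)`. -/
noncomputable def gaussS {q : ℕ} [NeZero q] (χ : DirichletCharacter ℂ q) : ℂ :=
  ∑ a : ZMod q, χ a * expq q (a.val : ℤ)

section Kloosterman

/-- The Kloosterman sum `∑ ψ(x) φ(x⁻¹)`, over the units `x` of `R`, of two additive characters `ψ`
and `φ`. The coefficients are absorbed into the characters: `S(a, b; q)` is the case
`ψ = e_q(a ·)`, `φ = e_q(b ·)` over `ℤ/qℤ`. -/
def kloostermanSum {R R' : Type*} [Ring R] [Fintype Rˣ] [Semiring R'] (ψ φ : AddChar R R') : R' :=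
  ∑ x : Rˣ, ψ x * φ ↑x⁻¹

variable {R R' : Type*} [CommRing R] [Fintype R] [Fintype Rˣ] [CommRing R']

lemma gaussSum_eq_sum_units (χ : MulChar R R') (ψ : AddChar R R') :
    gaussSum χ ψ = ∑ u : Rˣ, χ u * ψ u := by
  refine (sum_of_injOn Units.val Units.val_injective.injOn (by simp) (fun a _ ha ↦ ?_)
    fun _ _ ↦ rfl).symm
  have ha' : ¬IsUnit a := fun ⟨u, hu⟩ ↦ ha ⟨u, by simp, hu⟩
  rw [χ.map_nonunit ha', zero_mul]

lemma gaussSum_mul_gaussSum_eq_sum_kloostermanSum (χ : MulChar R R') (ψ φ : AddChar R R') :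
    gaussSum χ ψ * gaussSum χ φ = ∑ c : Rˣ, χ c * kloostermanSum ψ (φ.mulShift c) :=
  calc gaussSum χ ψ * gaussSum χ φ
    _ = ∑ u : Rˣ, ∑ v : Rˣ, χ ↑(u * v) * (ψ u * φ v) := by
      simp only [gaussSum_eq_sum_units, sum_mul_sum, Units.val_mul, map_mul, mul_mul_mul_comm]
    _ = ∑ u : Rˣ, ∑ c : Rˣ, χ c * (ψ u * φ (c * ↑u⁻¹)) :=
      sum_congr rfl fun u _ ↦ Fintype.sum_equiv (Equiv.mulLeft u) _ _ fun v ↦ by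
        simp [← Units.val_mul]
    _ = ∑ c : Rˣ, χ c * kloostermanSum ψ (φ.mulShift c) := by
      rw [sum_comm]
      simp only [kloostermanSum, AddChar.mulShift_apply, mul_sum]

end Kloosterman

section DirichletCharacter

lemma isPrimitive_iff_ne_one_of_prime {R : Type*} [CommMonoidWithZero R] {n : ℕ} (hn : n.Prime)
    (χ : DirichletCharacter R n) : χ.IsPrimitive ↔ χ ≠ 1 := by
  have : NeZero n := ⟨hn.ne_zero⟩
  rw [DirichletCharacter.isPrimitive_def, Ne, DirichletCharacter.eq_one_iff_conductor_eq_one]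
  refine ⟨fun h h' ↦ hn.ne_one (h.symm.trans h'), fun h ↦ ?_⟩
  exact ((Nat.dvd_prime hn).1 χ.conductor_dvd_level).resolve_left h

variable {R : Type*} [CommRing R] [IsDomain R] {n : ℕ} [NeZero n]
  [HasEnoughRootsOfUnity R (Monoid.exponent (ZMod n)ˣ)]

lemma sum_sum_dirichletCharacter_mul_inv (f : (ZMod n)ˣ → R) (r : (ZMod n)ˣ) :
    ∑ χ : DirichletCharacter R n, (∑ c : (ZMod n)ˣ, χ c * f c) * χ⁻¹ r = n.totient * f r :=
  calc ∑ χ : DirichletCharacter R n, (∑ c : (ZMod n)ˣ, χ c * f c) * χ⁻¹ r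
    _ = ∑ c : (ZMod n)ˣ, (∑ χ : DirichletCharacter R n, χ (r : ZMod n)⁻¹ * χ c) * f c := by
      simp only [sum_mul, MulChar.inv_apply, Ring.inverse_unit, ZMod.inv_coe_unit]
      rw [sum_comm]
      exact sum_congr rfl fun c _ ↦ sum_congr rfl fun χ _ ↦ by ring
    _ = n.totient * f r := by
      simp only [DirichletCharacter.sum_char_inv_mul_char_eq R r.isUnit, Units.val_inj]
      simp

lemma sum_gaussSum_mul_gaussSum_mul_inv (ψ φ : AddChar (ZMod n) R) (r : (ZMod n)ˣ) :
    ∑ χ : DirichletCharacter R n, gaussSum χ ψ * gaussSum χ φ * χ⁻¹ r =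
      n.totient * kloostermanSum ψ (φ.mulShift r) := by
  simp only [gaussSum_mul_gaussSum_eq_sum_kloostermanSum,
    sum_sum_dirichletCharacter_mul_inv fun c : (ZMod n)ˣ ↦ kloostermanSum ψ (φ.mulShift c)]

end DirichletCharacter

section StdAddChar

variable {q : ℕ} [NeZero q]

lemma expq_eq_stdAddChar (x : ℤ) : expq q x = ZMod.stdAddChar (x : ZMod q) := by
  rw [ZMod.stdAddChar_coe, expq]

lemma gaussS_eq_gaussSum (χ : DirichletCharacter ℂ q) : gaussS χ = gaussSum χ ZMod.stdAddChar := by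
  simp [gaussS, gaussSum, expq_eq_stdAddChar]

lemma kloos_eq_kloostermanSum (a b : ℤ) :
    kloos a b q =
      kloostermanSum (ZMod.stdAddChar.mulShift (a : ZMod q)) (ZMod.stdAddChar.mulShift b) := by
  simp [kloos, kloostermanSum, expq_eq_stdAddChar, AddChar.map_add_eq_mul, AddChar.mulShift_apply]

lemma stdAddChar_ne_one (hq : q ≠ 1) : (ZMod.stdAddChar : AddChar (ZMod q) ℂ) ≠ 1 := by
  have : Nontrivial (ZMod q) := ZMod.nontrivial_iff.2 hq
  simpa using ZMod.isPrimitive_stdAddChar q (one_ne_zero (α := ZMod q))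

lemma gaussS_one (hq : q.Prime) : gaussS (1 : DirichletCharacter ℂ q) = -1 := by
  have : Fact q.Prime := ⟨hq⟩
  rw [gaussS_eq_gaussSum, gaussSum_one_left (stdAddChar_ne_one hq.ne_one)]

lemma sum_gaussS_sq_mul_conj {r : ℤ} (hr : IsUnit (r : ZMod q)) :
    ∑ χ : DirichletCharacter ℂ q, gaussS χ ^ 2 * (starRingEnd ℂ) (χ (r : ZMod q)) =
      q.totient * kloos 1 r q := by
  obtain ⟨u, hu⟩ := hr
  have conj_apply (χ : DirichletCharacter ℂ q) : (starRingEnd ℂ) (χ u) = χ⁻¹ u :=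
    MulChar.star_apply' χ u
  simp only [← hu, conj_apply, gaussS_eq_gaussSum, sq, kloos_eq_kloostermanSum,
    sum_gaussSum_mul_gaussSum_mul_inv, Int.cast_one, AddChar.mulShift_one]

end StdAddChar

/-- For a prime `q` and `r` coprime to `q`, one has
`∑*_{χ mod q} G(χ)² · conj(χ)(r) = φ(q) · S(1, r; q) − 1`, the sum being over
primitive Dirichlet characters modulo `q`. -/
theorem sum_primitive_char_gauss_sq_mul_conj (q : ℕ) [NeZero q] (hq : q.Prime)
    (r : ℤ) (hr : IsUnit ((r : ZMod q))) :
    ∑ᶠ (χ : DirichletCharacter ℂ q) (_ : χ.IsPrimitive),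
        gaussS χ ^ 2 * (starRingEnd ℂ) (χ (r : ZMod q))
      = (q.totient : ℂ) * kloos 1 r q - 1 := by
  classical
  have primitive_iff (χ : DirichletCharacter ℂ q) : χ.IsPrimitive ↔ χ ∈ univ.erase 1 := by
    simp [isPrimitive_iff_ne_one_of_prime hq]
  rw [finsum_cond_eq_sum_of_cond_iff _ fun {χ} _ ↦ primitive_iff χ,
    sum_erase_eq_sub (mem_univ 1), sum_gaussS_sq_mul_conj hr, gaussS_one hq, MulChar.one_apply hr]
  norm_num
end

section
/- Let r and s be coprime positive integers, let s̄ be an integer inverse of s modulo r and r̄ an integer inverse of r modulo s. Let f : ℤ → ℂ be periodic of period r, let g : ℤ → ℂ be periodic of period s, and let n be an integer. Then ∑_{α = 0}^{rs−1} f(α)·g(α)·e_{rs}(αn) = (∑_{β = 0}^{r−1} f(β)·e_r(β n s̄)) · (∑_{γ = 0}^{s−1} g(γ)·e_s(γ n r̄)). -/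
open Finset

/-!
By the Chinese remainder theorem, the sum over `range (r * s)` of the product of an `r`-periodic and
an `s`-periodic function is the product of their sums over one period. To bring the additive
character `e_{rs}` into this form, multiply the exponent by
`s * s̄ + r * r̄ ≡ 1 [ZMOD r * s]`: this gives `e_{rs}(m) = e_r(m s̄) e_s(m r̄)`.
-/

section ChineseRemainder

variable {r s : ℕ}

lemma sum_range_mul_mod_mod {M : Type*} [AddCommMonoid M] (hrs : r.Coprime s) (F : ℕ → ℕ → M) :
    ∑ a ∈ range (r * s), F (a % r) (a % s) = ∑ b ∈ range r, ∑ c ∈ range s, F b c := by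
  rw [← sum_product']
  refine sum_bij' (fun a _ => (a % r, a % s)) (fun p _ => Nat.chineseRemainder hrs p.1 p.2)
    (fun a ha => ?mem_product) (fun p hp => ?mem_range) (fun a ha => ?left_inv)
    (fun p hp => ?right_inv) (fun _ _ => rfl)
  case mem_product =>
    have hpos : 0 < r * s := Nat.zero_lt_of_lt (mem_range.1 ha)
    exact mem_product.2 ⟨mem_range.2 (a.mod_lt (Nat.pos_of_mul_pos_right hpos)),
      mem_range.2 (a.mod_lt (Nat.pos_of_mul_pos_left hpos))⟩
  case mem_range =>
    obtain ⟨hb, hc⟩ := mem_product.1 hp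
    exact mem_range.2 (Nat.chineseRemainder_lt_mul hrs _ _
      (Nat.ne_zero_of_lt (mem_range.1 hb)) (Nat.ne_zero_of_lt (mem_range.1 hc)))
  case left_inv =>
    have hne : r * s ≠ 0 := Nat.ne_zero_of_lt (mem_range.1 ha)
    have hmod : a ≡ Nat.chineseRemainder hrs (a % r) (a % s) [MOD r * s] :=
      Nat.chineseRemainder_modEq_unique hrs (a.mod_modEq r).symm (a.mod_modEq s).symm
    exact hmod.symm.eq_of_lt_of_lt (Nat.chineseRemainder_lt_mul hrs _ _
      (left_ne_zero_of_mul hne) (right_ne_zero_of_mul hne)) (mem_range.1 ha)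
  case right_inv =>
    obtain ⟨hb, hc⟩ := mem_product.1 hp
    obtain ⟨hmod_r, hmod_s⟩ := (Nat.chineseRemainder hrs p.1 p.2).2
    exact Prod.ext (Nat.mod_eq_of_modEq hmod_r (mem_range.1 hb))
      (Nat.mod_eq_of_modEq hmod_s (mem_range.1 hc))

lemma sum_range_mul_of_periodic {R : Type*} [NonUnitalNonAssocSemiring R] (hrs : r.Coprime s)
    {f g : ℕ → R} (hf : Function.Periodic f r) (hg : Function.Periodic g s) :
    ∑ a ∈ range (r * s), f a * g a = (∑ b ∈ range r, f b) * ∑ c ∈ range s, g c := by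
  calc ∑ a ∈ range (r * s), f a * g a
      = ∑ a ∈ range (r * s), f (a % r) * g (a % s) := by simp only [hf.map_mod_nat, hg.map_mod_nat]
    _ = ∑ b ∈ range r, ∑ c ∈ range s, f b * g c := sum_range_mul_mod_mod hrs fun b c => f b * g c
    _ = (∑ b ∈ range r, f b) * ∑ c ∈ range s, g c := (sum_mul_sum ..).symm

end ChineseRemainder

lemma mul_dvd_mul_add_mul_sub_one {R : Type*} [CommRing R] {r s r' s' : R}
    (hs' : r ∣ s * s' - 1) (hr' : s ∣ r * r' - 1) : r * s ∣ s * s' + r * r' - 1 := by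
  have hprod : r * s ∣ (s * s' - 1) * (r * r' - 1) := mul_dvd_mul hs' hr'
  have hsplit : s * s' + r * r' - 1 = r * s * (s' * r') - (s * s' - 1) * (r * r' - 1) := by ring
  exact hsplit ▸ (dvd_mul_right _ _).sub hprod

lemma expq_add (q : ℕ) (x y : ℤ) : expq q (x + y) = expq q x * expq q y := by
  simp only [expq, ← Complex.exp_add, Int.cast_add, mul_add, add_div]

lemma expq_natCast_mul_self (q : ℕ) (k : ℤ) : expq q (q * k) = 1 := by
  rcases eq_or_ne q 0 with rfl | hq
  · simp [expq]
  · rw [expq, Complex.exp_eq_one_iff]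
    refine ⟨k, ?_⟩
    push_cast
    field_simp

lemma expq_eq_of_dvd_sub {q : ℕ} {x y : ℤ} (h : (q : ℤ) ∣ x - y) : expq q x = expq q y := by
  obtain ⟨k, hk⟩ := h
  rw [← sub_add_cancel x y, hk, expq_add, expq_natCast_mul_self, one_mul]

lemma periodic_expq_mul (q : ℕ) (t : ℤ) : Function.Periodic (fun x => expq q (x * t)) (q : ℤ) :=
  fun x => expq_eq_of_dvd_sub ⟨t, by ring⟩

lemma periodic_natCast_mul_expq {q : ℕ} {f : ℤ → ℂ} (hf : Function.Periodic f (q : ℤ)) (n t : ℤ) :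
    Function.Periodic (fun b : ℕ => f b * expq q (b * n * t)) q := fun b => by
  simpa only [Pi.mul_apply, Nat.cast_add, mul_assoc] using hf.mul (periodic_expq_mul q (n * t)) b

lemma expq_mul_mul_right {s : ℕ} (hs : s ≠ 0) (r : ℕ) (x : ℤ) :
    expq (r * s) (x * s) = expq r x := by
  have hs' : (s : ℂ) ≠ 0 := Nat.cast_ne_zero.2 hs
  unfold expq
  push_cast
  rw [← mul_assoc, mul_div_mul_right _ _ hs']

lemma expq_mul_eq_mul {r s : ℕ} (hr : r ≠ 0) (hs : s ≠ 0) {r' s' : ℤ}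
    (hs' : (r : ℤ) ∣ s * s' - 1) (hr' : (s : ℤ) ∣ r * r' - 1) (m : ℤ) :
    expq (r * s) m = expq r (m * s') * expq s (m * r') := by
  have hdvd : ((r * s : ℕ) : ℤ) ∣ m - (m * s' * s + m * r' * r) := by
    have hbezout : (r * s : ℤ) ∣ s * s' + r * r' - 1 := mul_dvd_mul_add_mul_sub_one hs' hr'
    have hfactor : m - (m * s' * s + m * r' * r) = -m * (s * s' + r * r' - 1) := by ring
    rw [Nat.cast_mul, hfactor]
    exact hbezout.mul_left (-m)
  calc expq (r * s) m
      = expq (r * s) (m * s' * s) * expq (s * r) (m * r' * r) := by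
        rw [expq_eq_of_dvd_sub hdvd, expq_add, mul_comm s r]
    _ = expq r (m * s') * expq s (m * r') := by
        rw [expq_mul_mul_right hs, expq_mul_mul_right hr]

/-- For coprime positive integers `r`, `s`, with `s̄` an inverse of `s` mod `r` and
`r̄` an inverse of `r` mod `s`, and `f`, `g : ℤ → ℂ` periodic of periods `r`, `s`
respectively, for any integer `n`:
`∑_{α=0}^{rs−1} f(α) g(α) e_{rs}(αn)
  = (∑_{β=0}^{r−1} f(β) e_r(β n s̄)) · (∑_{γ=0}^{s−1} g(γ) e_s(γ n r̄))`. -/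
theorem sum_mul_split (r s : ℕ) (hr : 0 < r) (hs : 0 < s) (hrs : Nat.Coprime r s)
    (sbar rbar : ℤ) (hsbar : (r : ℤ) ∣ (s * sbar - 1)) (hrbar : (s : ℤ) ∣ (r * rbar - 1))
    (f g : ℤ → ℂ) (hf : Function.Periodic f (r : ℤ)) (hg : Function.Periodic g (s : ℤ))
    (n : ℤ) :
    ∑ α ∈ Finset.range (r * s), f (α : ℤ) * g (α : ℤ) * expq (r * s) ((α : ℤ) * n)
      = (∑ β ∈ Finset.range r, f (β : ℤ) * expq r ((β : ℤ) * n * sbar)) *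
        (∑ γ ∈ Finset.range s, g (γ : ℤ) * expq s ((γ : ℤ) * n * rbar)) := by
  rw [← sum_range_mul_of_periodic hrs (periodic_natCast_mul_expq hf n sbar)
    (periodic_natCast_mul_expq hg n rbar)]
  refine sum_congr rfl fun α _ => ?_
  rw [expq_mul_eq_mul hr.ne' hs.ne' hsbar hrbar, mul_mul_mul_comm]
end

section
/- Let W : ℝ → ℂ be a Schwartz function, let Q be a positive integer, let N > 0 be a real number, and let c : ℤ → ℂ be periodic of period Q. Then ∑_{n ∈ ℤ} c(n)·W(n/N) = (N/Q)·∑_{h ∈ ℤ} ĉ(h)·Ŵ(hN/Q), where ĉ(h) = ∑_{α = 0}^{Q−1} c(α)·e_Q(αh) and Ŵ(ξ) = ∫_ℝ W(y)·exp(−2πi ξ y) dy, and both series converge absolutely. -/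
open Finset MeasureTheory

/-!
A function of period `Q` is constant on each residue class `α + Qℤ`, and on such a class the
left-hand side is a sum of `W` over a shifted lattice. Poisson summation turns that sum into the sum
of `𝓕 W` over the dual lattice `(N / Q) ℤ`, the shift by `α` appearing as the phase `e_Q(αh)`;
summing over `α` collects the phases into `ĉ(h)`.
-/

section Poisson

open Filter Asymptotics
open scoped FourierTransform

variable {W : ℝ → ℂ} {b a N : ℝ} {Q : ℕ}

theorem fourier_comp_mul_left {E : Type*} [NormedAddCommGroup E] [NormedSpace ℂ E] (f : ℝ → E)
    (ha : a ≠ 0) (ξ : ℝ) : 𝓕 (fun x => f (a * x)) ξ = |a|⁻¹ • 𝓕 f (ξ / a) := by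
  have hphase (x : ℝ) : x * ξ = a * x * (ξ / a) := by field_simp
  simp_rw [Real.fourier_real_eq, hphase]
  rw [Measure.integral_comp_mul_left (fun y => Real.fourierChar (-(y * (ξ / a))) • f y) a, abs_inv]

theorem fourier_eq_integral_mul_exp (W : ℝ → ℂ) (ξ : ℝ) :
    𝓕 W ξ = ∫ y : ℝ, W y * Complex.exp (-(2 * Real.pi * Complex.I * ξ * y)) := by
  rw [Real.fourier_real_eq_integral_exp_smul]
  congr 1 with y
  rw [smul_eq_mul, mul_comm]
  congr 2
  push_cast
  ring

theorem isBigO_comp_mul_left_rpow {E : Type*} [Norm E] {f : ℝ → E}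
    (hf : f =O[cocompact ℝ] (|·| ^ (-b))) (ha : a ≠ 0) :
    (fun x => f (a * x)) =O[cocompact ℝ] (|·| ^ (-b)) := by
  refine (hf.comp_tendsto (tendsto_cocompact_mul_left₀ ha)).trans ?_
  simp only [Function.comp_def, abs_mul, Real.mul_rpow (abs_nonneg _) (abs_nonneg _)]
  exact isBigO_const_mul_self _ _ _

theorem summable_int_comp_mul_left_of_isBigO_rpow {E : Type*} [NormedAddCommGroup E]
    [CompleteSpace E] {f : ℝ → E} (hb : 1 < b) (hf : f =O[cocompact ℝ] (|·| ^ (-b)))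
    (ha : a ≠ 0) : Summable fun n : ℤ => f (a * n) :=
  summable_of_isBigO (Real.summable_abs_int_rpow hb)
    ((isBigO_comp_mul_left_rpow hf ha).comp_tendsto Int.tendsto_coe_cofinite)

theorem summable_int_schwartz_mul_div {E : Type*} [NormedAddCommGroup E] [NormedSpace ℝ E]
    [CompleteSpace E] (f : SchwartzMap ℝ E) (hQ : 0 < Q) (hN : N ≠ 0) :
    Summable fun n : ℤ => f (n * N / Q) := by
  have hNQ : N / Q ≠ 0 := div_ne_zero hN (Nat.cast_ne_zero.2 hQ.ne')
  simpa only [div_mul_eq_mul_div, mul_comm N] using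
    summable_int_comp_mul_left_of_isBigO_rpow one_lt_two (f.isBigO_cocompact_rpow (-2)) hNQ

theorem tsum_comp_mul_left_eq_tsum_fourier (hW : Continuous W) (hb : 1 < b)
    (hdecay : W =O[cocompact ℝ] (|·| ^ (-b))) (ha : a ≠ 0)
    (hFW : Summable fun h : ℤ => 𝓕 W (h / a)) (x : ℝ) :
    ∑' m : ℤ, W (a * (x + m)) =
      ((|a|⁻¹ : ℝ) : ℂ) * ∑' h : ℤ, 𝓕 W (h / a) * fourier h (x : UnitAddCircle) := by
  have hF (ξ : ℝ) : 𝓕 (fun y => W (a * y)) ξ = ((|a|⁻¹ : ℝ) : ℂ) * 𝓕 W (ξ / a) := by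
    rw [fourier_comp_mul_left W ha, Complex.real_smul]
  have hsum : Summable fun h : ℤ => 𝓕 (fun y => W (a * y)) h := by
    simpa only [hF] using hFW.mul_left _
  rw [Real.tsum_eq_tsum_fourier_of_rpow_decay_of_summable (by fun_prop) hb
    (isBigO_comp_mul_left_rpow hdecay ha) hsum x, ← tsum_mul_left]
  simp only [hF, mul_assoc]

theorem fourier_div_eq_expq (Q : ℕ) (α h : ℤ) :
    fourier h ((α / Q : ℝ) : UnitAddCircle) = expq Q (α * h) := by
  rw [fourier_coe_apply, expq]
  congr 1
  push_cast
  ring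

theorem norm_expq (q : ℕ) (x : ℤ) : ‖expq q x‖ = 1 := by
  rw [← mul_one x, ← fourier_div_eq_expq]
  exact Circle.norm_coe _

theorem injective_mul_add (hQ : 0 < Q) (α : ℤ) : Function.Injective fun m : ℤ => m * Q + α :=
  fun m m' hm => by simpa [hQ.ne'] using hm

theorem hasSum_comp_div_residueClass (hW : Continuous W) (hb : 1 < b)
    (hdecay : W =O[cocompact ℝ] (|·| ^ (-b))) (hQ : 0 < Q) (hN : N ≠ 0)
    (hFW : Summable fun h : ℤ => 𝓕 W (h * N / Q)) (α : ℤ) :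
    HasSum (fun m : ℤ => W ((m * Q + α : ℤ) / N))
      (((|N| / Q : ℝ) : ℂ) * ∑' h : ℤ, 𝓕 W (h * N / Q) * expq Q (α * h)) := by
  have hQ' : (Q : ℝ) ≠ 0 := by positivity
  have hsummable : Summable fun n : ℤ => W (n / N) := by
    simpa only [inv_mul_eq_div] using
      summable_int_comp_mul_left_of_isBigO_rpow hb hdecay (inv_ne_zero hN)
  have hdual (h : ℤ) : (h : ℝ) / (Q / N) = h * N / Q := div_div_eq_mul_div _ _ _
  have hpoint (m : ℤ) : (Q / N : ℝ) * (α / Q + m) = (m * Q + α : ℤ) / N := by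
    push_cast
    field_simp
    ring
  have hpoisson := tsum_comp_mul_left_eq_tsum_fourier hW hb hdecay (div_ne_zero hQ' hN)
    (by simpa only [hdual] using hFW) (α / Q)
  simp only [hpoint, hdual, fourier_div_eq_expq, abs_div, Nat.abs_cast, inv_div] at hpoisson
  exact hpoisson ▸ (hsummable.comp_injective (injective_mul_add hQ α)).hasSum

theorem hasSum_of_hasSum_residueClass {E : Type*} [AddCommMonoid E] [TopologicalSpace E]
    [ContinuousAdd E] (hQ : 0 < Q) {u : ℤ → E} {s : ℕ → E}
    (hu : ∀ α ∈ range Q, HasSum (fun m : ℤ => u (m * Q + α)) (s α)) :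
    HasSum u (∑ α ∈ range Q, s α) := by
  have hQ' : (0 : ℤ) < Q := by exact_mod_cast hQ
  have hmod_nonneg (n : ℤ) : 0 ≤ n % Q := n.emod_nonneg hQ'.ne'
  have hclass (α) (hα : α ∈ range Q) :
      HasSum (fun n : ℤ => if (n % Q).toNat = α then u n else 0) (s α) := by
    refine ((injective_mul_add hQ α).hasSum_iff fun n hn => if_neg fun hnα => hn ?_).1 ?_
    · refine ⟨n / Q, ?_⟩
      rw [← hnα, Int.toNat_of_nonneg (hmod_nonneg n)]
      exact Int.ediv_mul_add_emod n Q
    · have hαmod (m : ℤ) : ((m * Q + α) % Q).toNat = α := by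
        rw [Int.mul_add_emod_self_right, ← Int.natCast_mod, Int.toNat_natCast,
          Nat.mod_eq_of_lt (mem_range.1 hα)]
      simpa only [Function.comp_def, hαmod, if_true] using hu α hα
  have hsplit (n : ℤ) : u n = ∑ α ∈ range Q, if (n % Q).toNat = α then u n else 0 := by
    have hlt : (n % Q).toNat < Q := (Int.toNat_lt (hmod_nonneg n)).2 (n.emod_lt_of_pos hQ')
    rw [sum_ite_eq, if_pos (mem_range.2 hlt)]
  simpa only [← hsplit] using hasSum_sum hclass

variable {E : Type*} [AddCommGroup E] [Module ℂ E]

/-- The finite Fourier transform `ĉ(h) = ∑_{α mod Q} c(α) e_Q(αh)`. It is defined for every `c`, by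
summing over the representatives `0, …, Q - 1`, but depends on that choice unless `c` has
period `Q`. -/
noncomputable def finiteFourier (Q : ℕ) (c : ℤ → E) (h : ℤ) : E :=
  ∑ α ∈ range Q, expq Q (α * h) • c α

theorem finiteFourier_eq_sum_mul (Q : ℕ) (c : ℤ → ℂ) (h : ℤ) :
    finiteFourier Q c h = ∑ α ∈ range Q, c α * expq Q (α * h) := by
  simp only [finiteFourier, smul_eq_mul, mul_comm]

variable [TopologicalSpace E] [ContinuousAdd E] [ContinuousSMul ℂ E]

theorem hasSum_smul_finiteFourier {F : ℤ → ℂ} (hF : Summable F) (Q : ℕ) (c : ℤ → E) :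
    HasSum (fun h => F h • finiteFourier Q c h)
      (∑ α ∈ range Q, (∑' h, F h * expq Q (α * h)) • c α) := by
  simp only [finiteFourier, smul_sum, smul_smul]
  refine hasSum_sum fun α _ => HasSum.smul_const ?_ _
  have hnorm (h : ℤ) : ‖F h * expq Q (α * h)‖ = ‖F h‖ := by rw [norm_mul, norm_expq, mul_one]
  exact (Summable.of_norm (by simpa only [hnorm] using hF.norm)).hasSum

theorem poisson_periodic_general [T2Space E] {c : ℤ → E} (hW : Continuous W) (hb : 1 < b)
    (hdecay : W =O[cocompact ℝ] (|·| ^ (-b))) (hQ : 0 < Q) (hN : N ≠ 0)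
    (hFW : Summable fun h : ℤ => 𝓕 W (h * N / Q)) (hc : Function.Periodic c (Q : ℤ)) :
    Summable (fun n : ℤ => W (n / N) • c n) ∧
    Summable (fun h : ℤ => 𝓕 W (h * N / Q) • finiteFourier Q c h) ∧
    ∑' n : ℤ, W (n / N) • c n =
      ((|N| / Q : ℝ) : ℂ) • ∑' h : ℤ, 𝓕 W (h * N / Q) • finiteFourier Q c h := by
  have hleft := hasSum_of_hasSum_residueClass hQ (u := fun n => W (n / N) • c n) fun α _ => by
    have hcα (m : ℤ) : c (m * Q + α) = c α := by rw [add_comm]; exact hc.int_mul m α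
    simpa only [hcα] using
      (hasSum_comp_div_residueClass hW hb hdecay hQ hN hFW α).smul_const (c α)
  have hright := hasSum_smul_finiteFourier hFW Q c
  refine ⟨hleft.summable, hright.summable, ?_⟩
  simp only [hleft.tsum_eq, hright.tsum_eq, smul_sum, mul_smul]

end Poisson

/-- Poisson summation with periodic coefficients: for a Schwartz function `W`,
a positive integer `Q`, a real `N > 0`, and `c : ℤ → ℂ` of period `Q`,
`∑_{n ∈ ℤ} c(n) W(n/N) = (N/Q) ∑_{h ∈ ℤ} ĉ(h) Ŵ(hN/Q)`, where
`ĉ(h) = ∑_{α mod Q} c(α) e_Q(αh)` and `Ŵ(ξ) = ∫ W(y) e^{−2πiξy} dy`;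
moreover both series converge absolutely. -/
theorem poisson_periodic (W : SchwartzMap ℝ ℂ) (Q : ℕ) (hQ : 0 < Q)
    (N : ℝ) (hN : 0 < N) (c : ℤ → ℂ) (hc : Function.Periodic c (Q : ℤ)) :
    Summable (fun n : ℤ => c n * W ((n : ℝ) / N)) ∧
    Summable (fun h : ℤ =>
      (∑ α ∈ Finset.range Q, c (α : ℤ) * expq Q ((α : ℤ) * h)) *
        ∫ y : ℝ, W y * Complex.exp (-(2 * Real.pi * Complex.I * (((h : ℝ) * N / Q : ℝ)) * y))) ∧
    ∑' n : ℤ, c n * W ((n : ℝ) / N)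
      = ((N / Q : ℝ) : ℂ) *
        ∑' h : ℤ,
          (∑ α ∈ Finset.range Q, c (α : ℤ) * expq Q ((α : ℤ) * h)) *
            ∫ y : ℝ, W y * Complex.exp (-(2 * Real.pi * Complex.I * (((h : ℝ) * N / Q : ℝ)) * y)) := by
  simpa only [fourier_eq_integral_mul_exp, finiteFourier_eq_sum_mul, smul_eq_mul, mul_comm,
    abs_of_pos hN] using
    poisson_periodic_general W.continuous one_lt_two (W.isBigO_cocompact_rpow (-2)) hQ hN.ne'
      (summable_int_schwartz_mul_div (FourierTransform.fourier W) hQ hN.ne') hc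
end
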